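/- Let μ₁, μ₂ > 0 and 0 < ε < min(μ₁, μ₂). With z₁ ~ N(μ₁√E,1), z₂ ~ N(μ₂√E,1) independent, the probability Λ₁(E) = P(z₁+z₂>0, z₁>0, z₂<0) satisfies the lower bound Λ₁(E) ≥ (1 − Q(ε√(2E)))·(Q(μ₂√(2E)) − Q((μ₂+μ₁−ε)√(2E))), where Q(x) = P(Z > x) for a standard normal Z (so Q(x√2) = P(N(m,1/2)-type tail); here Q(a) = ∫_a^∞ (1/√(2π)) e^{−u²/2} du). -/

import Mathlib

open MeasureTheory ProbabilityTheory

/-- The standard Gaussian tail function `Q(x) = ∫_x^∞ (1/√(2π)) e^{-u²/2} du`. -/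
noncomputable def gaussQ (x : ℝ) : ℝ :=
  ∫ u in Set.Ioi x, (1 / Real.sqrt (2 * Real.pi)) * Real.exp (-u ^ 2 / 2)

/-!
Write `a = μ₁ √E`, `b = μ₂ √E`, `w = ε √(2E)` and `c = √2 a - w`, so that the bound is
`Q(-w) * (Q(√2 b) - Q(√2 b + c))`. Three inequalities lead from it to the probability.

* `Q(√2 b) - Q(√2 b + c) ≤ Q(b) * Q(-c)`. The function `t ↦ Q(b) * Q(-t) + Q(√2 b + t)` decreases
  as long as `√2 b t ≤ log r`, where `r` is a lower bound for `exp(-b²) / Q(b)`, and at the end of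
  that range the first term alone exceeds `Q(√2 b)` provided `r` is not too small; otherwise
  `Q(√2 b)` is a small fraction of `Q(b)`.
* `Q(-w) * Q(-c) ≤ Q(-a / √2)²`, by log-concavity of `Q`.
* `Q(b) * Q(-a / √2)²` is at most the probability: by rotation invariance `Q(-a / √2)²` is the mass
  of the sector `|z₂| < z₁` under `N(a, 1) ⊗ N(0, 1)`, and on each slice `z₁ = s > 0` log-concavity
  bounds `Q(b)` times the `N(0, 1)`-mass of `(-s, s)` by the `N(b, 1)`-mass of `(-s, 0)`.
-/

open Set Filter Topology

local notation "φ" => gaussianPDFReal 0 1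

lemma stdGaussianPDF_eq (x : ℝ) : φ x = φ 0 * Real.exp (-x ^ 2 / 2) := by
  simp [gaussianPDFReal]

lemma stdGaussianPDF_pos (x : ℝ) : 0 < φ x := gaussianPDFReal_pos 0 1 x one_ne_zero

lemma hasDerivAt_stdGaussianPDF (x : ℝ) : HasDerivAt φ (-x * φ x) x := by
  have hexponent : HasDerivAt (fun u : ℝ => -u ^ 2 / 2) (-x) x :=
    ((hasDerivAt_pow 2 x).neg.div_const 2).congr_deriv (by simp; ring)
  refine ((hexponent.exp.const_mul (φ 0)).congr_deriv ?_).congr_of_eventuallyEq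
    (.of_forall stdGaussianPDF_eq)
  rw [stdGaussianPDF_eq x]
  ring

lemma continuous_stdGaussianPDF : Continuous φ :=
  continuous_iff_continuousAt.2 fun x => (hasDerivAt_stdGaussianPDF x).continuousAt

lemma antitoneOn_stdGaussianPDF : AntitoneOn φ (Ici 0) := by
  intro x (hx : 0 ≤ x) y _ hxy
  rw [stdGaussianPDF_eq x, stdGaussianPDF_eq y]
  have := (stdGaussianPDF_pos 0).le
  gcongr

lemma gaussQ_eq_integral (x : ℝ) : gaussQ x = ∫ u in Ioi x, φ u := by
  simp [gaussQ, gaussianPDFReal]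

lemma gaussQ_eq_measureReal (x : ℝ) : gaussQ x = (gaussianReal 0 1).real (Ioi x) := by
  rw [gaussQ_eq_integral, Measure.real, gaussianReal_apply_eq_integral 0 one_ne_zero,
    ENNReal.toReal_ofReal]
  exact integral_nonneg (gaussianPDFReal_nonneg 0 1)

lemma gaussQ_sub_eq_intervalIntegral (x y : ℝ) : gaussQ x - gaussQ y = ∫ u in x..y, φ u := by
  have hφ := integrable_gaussianPDFReal 0 1
  rw [gaussQ_eq_integral, gaussQ_eq_integral, sub_eq_iff_eq_add,
    intervalIntegral.integral_interval_add_Ioi hφ.integrableOn hφ.integrableOn]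

lemma hasDerivAt_gaussQ (x : ℝ) : HasDerivAt gaussQ (-φ x) x := by
  have hintegral := (continuous_stdGaussianPDF.integral_hasStrictDerivAt 0 x).hasDerivAt
  refine (hintegral.const_sub (gaussQ 0)).congr_of_eventuallyEq (.of_forall fun y => ?_)
  simp only [← gaussQ_sub_eq_intervalIntegral]
  ring

lemma strictAnti_gaussQ : StrictAnti gaussQ :=
  strictAnti_of_hasDerivAt_neg hasDerivAt_gaussQ fun x => neg_neg_of_pos (stdGaussianPDF_pos x)

lemma gaussQ_pos (x : ℝ) : 0 < gaussQ x :=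
  calc 0 ≤ gaussQ (x + 1) := by rw [gaussQ_eq_measureReal]; exact measureReal_nonneg
    _ < gaussQ x := strictAnti_gaussQ (lt_add_one x)

lemma gaussianReal_real_Ioi (m x : ℝ) : (gaussianReal m 1).real (Ioi x) = gaussQ (x - m) := by
  rw [gaussQ_eq_measureReal, ← zero_add m, ← gaussianReal_map_add_const m,
    map_measureReal_apply (by fun_prop) measurableSet_Ioi]
  simp

lemma gaussianReal_real_Iio (m x : ℝ) : (gaussianReal m 1).real (Iio x) = gaussQ (m - x) := by
  rw [← neg_neg m, ← gaussianReal_map_neg, map_measureReal_apply (by fun_prop) measurableSet_Iio,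
    ← neg_sub_neg x, neg_neg, ← gaussianReal_real_Ioi]
  simp

lemma gaussianReal_real_Ioo {x y : ℝ} (hxy : x < y) (m : ℝ) :
    (gaussianReal m 1).real (Ioo x y) = gaussQ (x - m) - gaussQ (y - m) := by
  have := nullSingletonClass_gaussianReal (μ := m) one_ne_zero
  rw [← Ioi_sdiff_Ici, measureReal_sdiff (Ici_subset_Ioi.2 hxy) measurableSet_Ici,
    ← measureReal_congr Ioi_ae_eq_Ici, gaussianReal_real_Ioi, gaussianReal_real_Ioi]

lemma gaussQ_neg (x : ℝ) : gaussQ (-x) = 1 - gaussQ x := by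
  have := nullSingletonClass_gaussianReal (μ := 0) one_ne_zero
  rw [gaussQ_eq_measureReal x, ← probReal_compl_eq_one_sub measurableSet_Ioi, compl_Ioi,
    ← measureReal_congr Iio_ae_eq_Iic, gaussianReal_real_Iio, zero_sub]

lemma gaussQ_zero : gaussQ 0 = 1 / 2 := by
  have := gaussQ_neg 0
  rw [neg_zero] at this
  linarith

lemma tendsto_stdGaussianPDF_atTop : Tendsto φ atTop (𝓝 0) := by
  have hexponent : Tendsto (fun x : ℝ => -x ^ 2 / 2) atTop atBot := by
    simp only [neg_div]
    exact tendsto_neg_atTop_atBot.comp ((tendsto_pow_atTop two_ne_zero).atTop_div_const two_pos)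
  have hexp := (Real.tendsto_exp_atBot.comp hexponent).const_mul (φ 0)
  rw [mul_zero] at hexp
  exact hexp.congr fun x => (stdGaussianPDF_eq x).symm

lemma integrable_mul_stdGaussianPDF : Integrable fun u => u * φ u := by
  convert (integrable_mul_exp_neg_mul_sq (half_pos one_pos)).const_mul (φ 0) using 2 with u
  rw [stdGaussianPDF_eq u]
  ring_nf

lemma integral_Ioi_mul_stdGaussianPDF (x : ℝ) : ∫ u in Ioi x, u * φ u = φ x := by
  have := integral_Ioi_of_hasDerivAt_of_tendsto' (a := x) (f := fun u => -φ u)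
    (fun u _ => (hasDerivAt_stdGaussianPDF u).neg.congr_deriv (by ring))
    integrable_mul_stdGaussianPDF.integrableOn tendsto_stdGaussianPDF_atTop.neg
  simpa using this

lemma mul_gaussQ_le_stdGaussianPDF (x : ℝ) : x * gaussQ x ≤ φ x :=
  calc x * gaussQ x = ∫ u in Ioi x, x * φ u := by rw [gaussQ_eq_integral, integral_const_mul]
    _ ≤ ∫ u in Ioi x, u * φ u :=
      setIntegral_mono_on ((integrable_gaussianPDFReal 0 1).const_mul x).integrableOn
        integrable_mul_stdGaussianPDF.integrableOn measurableSet_Ioi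
        fun u hu => mul_le_mul_of_nonneg_right (le_of_lt hu) (stdGaussianPDF_pos u).le
    _ = φ x := integral_Ioi_mul_stdGaussianPDF x

lemma monotone_stdGaussianPDF_div_gaussQ : Monotone fun x => φ x / gaussQ x := by
  refine monotone_of_hasDerivAt_nonneg (fun x => (hasDerivAt_stdGaussianPDF x).fun_div
    (hasDerivAt_gaussQ x) (gaussQ_pos x).ne') fun x => ?_
  have : 0 ≤ φ x * (φ x - x * gaussQ x) :=
    mul_nonneg (stdGaussianPDF_pos x).le (sub_nonneg.2 (mul_gaussQ_le_stdGaussianPDF x))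
  exact div_nonneg (by linarith) (sq_nonneg _)

lemma antitone_gaussQ_add_div_gaussQ {d : ℝ} (hd : 0 ≤ d) :
    Antitone fun x => gaussQ (x + d) / gaussQ x := by
  refine antitone_of_hasDerivAt_nonpos (fun x =>
    ((hasDerivAt_gaussQ (x + d)).comp_add_const x d).fun_div (hasDerivAt_gaussQ x)
      (gaussQ_pos x).ne') fun x => ?_
  have hhazard := monotone_stdGaussianPDF_div_gaussQ (le_add_of_nonneg_right (a := x) hd)
  rw [div_le_div_iff₀ (gaussQ_pos _) (gaussQ_pos _)] at hhazard
  exact div_nonpos_of_nonpos_of_nonneg (by linarith) (sq_nonneg _)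

lemma gaussQ_add_le_two_mul {x d : ℝ} (hx : 0 ≤ x) (hd : 0 ≤ d) :
    gaussQ (x + d) ≤ 2 * gaussQ d * gaussQ x := by
  have : gaussQ (x + d) / gaussQ x ≤ gaussQ (0 + d) / gaussQ 0 :=
    antitone_gaussQ_add_div_gaussQ hd hx
  rw [zero_add, gaussQ_zero, div_le_iff₀ (gaussQ_pos x)] at this
  linarith

lemma gaussQ_mul_gaussQ_le_sq (x y : ℝ) : gaussQ x * gaussQ y ≤ gaussQ ((x + y) / 2) ^ 2 := by
  wlog hxy : x ≤ y generalizing x y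
  · rw [mul_comm, add_comm]
    exact this y x (le_of_not_ge hxy)
  have hratio := antitone_gaussQ_add_div_gaussQ (d := (y - x) / 2) (by linarith)
    (show x ≤ (x + y) / 2 by linarith)
  rw [div_le_div_iff₀ (gaussQ_pos _) (gaussQ_pos _)] at hratio
  ring_nf at hratio ⊢
  linarith

lemma gaussianReal_prod_real_sector (m₁ m₂ : ℝ) :
    ((gaussianReal m₁ 1).prod (gaussianReal m₂ 1)).real {z | 0 < z.1 + z.2 ∧ 0 < z.1 - z.2} =
      gaussQ (-(m₁ + m₂) / √2) * gaussQ (-(m₁ - m₂) / √2) := by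
  set γ := gaussianReal 0 1
  have hshift : (γ.prod γ).map (Prod.map (· + m₁) (· + m₂)) =
      (gaussianReal m₁ 1).prod (gaussianReal m₂ 1) := by
    rw [← Measure.map_prod_map _ _ (by fun_prop) (by fun_prop), gaussianReal_map_add_const,
      gaussianReal_map_add_const, zero_add, zero_add]
  have hrot : (γ.prod γ).map (ContinuousLinearMap.rotation (-(Real.pi / 4))) = γ.prod γ :=
    IsGaussian.map_rotation_eq_self (by simp [γ]) _
  have hpre : ContinuousLinearMap.rotation (-(Real.pi / 4)) ⁻¹'
      (Prod.map (· + m₁) (· + m₂) ⁻¹' {z : ℝ × ℝ | 0 < z.1 + z.2 ∧ 0 < z.1 - z.2}) =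
        Ioi (-(m₁ + m₂) / √2) ×ˢ Iio ((m₁ - m₂) / √2) := by
    ext z
    have hsqrt : (0 : ℝ) < √2 := by positivity
    simp only [ContinuousLinearMap.rotation_apply, Real.cos_neg, Real.sin_neg,
      Real.cos_pi_div_four, Real.sin_pi_div_four, mem_preimage, mem_ofPred_eq, Prod.map_fst,
      Prod.map_snd, smul_eq_mul, mem_prod, mem_Ioi, mem_Iio, div_lt_iff₀ hsqrt,
      lt_div_iff₀ hsqrt]
    constructor <;> rintro ⟨h₁, h₂⟩ <;> constructor <;> linarith
  have hmeas : MeasurableSet {z : ℝ × ℝ | 0 < z.1 + z.2 ∧ 0 < z.1 - z.2} := by measurability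
  rw [← hshift, map_measureReal_apply (by fun_prop) hmeas, ← hrot,
    map_measureReal_apply (by fun_prop) (hmeas.preimage (by fun_prop)), hpre, measureReal_prod_prod,
    gaussianReal_real_Ioi, gaussianReal_real_Iio, sub_zero, zero_sub, neg_div _ (m₁ - m₂)]

lemma gaussQ_mul_gaussianReal_real_Ioo_le {b s : ℝ} (hb : 0 ≤ b) (hs : 0 < s) :
    gaussQ b * (gaussianReal 0 1).real (Ioo (-s) s) ≤ (gaussianReal b 1).real (Ioo (-s) 0) := by
  rw [gaussianReal_real_Ioo (neg_lt_self hs), gaussianReal_real_Ioo (neg_neg_of_pos hs),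
    sub_zero, sub_zero, zero_sub, gaussQ_neg, gaussQ_neg, ← neg_add', gaussQ_neg, add_comm s b]
  linarith [gaussQ_add_le_two_mul hb hs.le]

lemma gaussQ_mul_gaussQ_sq_le_gaussianReal_prod_real (a : ℝ) {b : ℝ} (hb : 0 ≤ b) :
    gaussQ b * gaussQ (-a / √2) ^ 2 ≤
      ((gaussianReal a 1).prod (gaussianReal b 1)).real
        {z | 0 < z.1 + z.2 ∧ 0 < z.1 ∧ z.2 < 0} := by
  have hslice (s : ℝ) :
      ENNReal.ofReal (gaussQ b) * gaussianReal 0 1 {t | 0 < s + t ∧ 0 < s - t} ≤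
        gaussianReal b 1 {t | 0 < s + t ∧ 0 < s ∧ t < 0} := by
    rcases le_or_gt s 0 with hs | hs
    · have hempty : {t | 0 < s + t ∧ 0 < s - t} = ∅ :=
        eq_empty_of_forall_notMem fun t ⟨_, _⟩ => by linarith
      rw [hempty, measure_empty, mul_zero]
      exact zero_le
    · have hwide : {t | 0 < s + t ∧ 0 < s - t} = Ioo (-s) s := by
        ext t; simp only [mem_ofPred_eq, mem_Ioo]; grind
      have hnarrow : {t | 0 < s + t ∧ 0 < s ∧ t < 0} = Ioo (-s) 0 := by
        ext t; simp only [mem_ofPred_eq, mem_Ioo]; grind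
      rw [hwide, hnarrow, ← ofReal_measureReal, ← ofReal_measureReal,
        ← ENNReal.ofReal_mul (gaussQ_pos b).le]
      exact ENNReal.ofReal_le_ofReal (gaussQ_mul_gaussianReal_real_Ioo_le hb hs)
  have hsector := gaussianReal_prod_real_sector a 0
  rw [add_zero, sub_zero, ← sq] at hsector
  rw [← hsector, Measure.real, Measure.real, ← ENNReal.toReal_ofReal (gaussQ_pos b).le,
    ← ENNReal.toReal_mul]
  refine ENNReal.toReal_mono (measure_ne_top _ _) ?_
  rw [Measure.prod_apply (by measurability), Measure.prod_apply (by measurability),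
    ← lintegral_const_mul' _ _ ENNReal.ofReal_ne_top]
  exact lintegral_mono hslice

lemma stdGaussianPDF_zero_mem_Icc : φ 0 ∈ Icc 0.398 0.4 := by
  have hφ : φ 0 = (√(2 * Real.pi))⁻¹ := by simp [gaussianPDFReal]
  have hlower : 2.5 ≤ √(2 * Real.pi) :=
    Real.le_sqrt_of_sq_le (by linarith [Real.pi_gt_d4])
  have hupper : √(2 * Real.pi) ≤ 2.51 :=
    Real.sqrt_le_iff.2 ⟨by norm_num, by linarith [Real.pi_lt_d4]⟩
  rw [hφ]
  constructor
  · calc (0.398 : ℝ) ≤ 2.51⁻¹ := by norm_num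
      _ ≤ (√(2 * Real.pi))⁻¹ := inv_anti₀ (by positivity) hupper
  · calc (√(2 * Real.pi))⁻¹ ≤ 2.5⁻¹ := inv_anti₀ (by norm_num) hlower
      _ ≤ 0.4 := by norm_num

lemma stdGaussianPDF_add (x t : ℝ) : φ (x + t) = Real.exp (-x ^ 2 / 2 - x * t) * φ t := by
  rw [stdGaussianPDF_eq (x + t), stdGaussianPDF_eq t, mul_left_comm, ← Real.exp_add]
  ring_nf

lemma sub_mul_stdGaussianPDF_le_gaussQ_sub {x y : ℝ} (hx : 0 ≤ x) (hxy : x ≤ y) :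
    (y - x) * φ y ≤ gaussQ x - gaussQ y := by
  rw [gaussQ_sub_eq_intervalIntegral, ← smul_eq_mul, ← intervalIntegral.integral_const]
  exact intervalIntegral.integral_mono_on hxy intervalIntegrable_const
    (continuous_stdGaussianPDF.intervalIntegrable x y) fun u hu =>
      antitoneOn_stdGaussianPDF (hx.trans hu.1) (hx.trans hxy) hu.2

lemma gaussQ_le_cubic {x : ℝ} (hx : 0 ≤ x) : gaussQ x ≤ 1 / 2 - φ 0 * (x - x ^ 3 / 6) := by
  have hmono : Monotone fun t => 1 / 2 - φ 0 * (t - t ^ 3 / 6) - gaussQ t := by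
    refine monotone_of_hasDerivAt_nonneg (fun t =>
      (((((hasDerivAt_id t).sub ((hasDerivAt_pow 3 t).div_const 6)).const_mul (φ 0)).const_sub
        (1 / 2)).sub (hasDerivAt_gaussQ t))) fun t => ?_
    have : φ 0 * (-t ^ 2 / 2 + 1) ≤ φ t := by
      rw [stdGaussianPDF_eq t]
      exact mul_le_mul_of_nonneg_left (Real.add_one_le_exp _) (stdGaussianPDF_pos 0).le
    simp only [Pi.zero_apply]
    push_cast
    linarith
  have := hmono hx
  simp only [gaussQ_zero] at this
  linarith

lemma gaussQ_sub_gaussQ_add_le_exp_mul {x c : ℝ} (hx : 0 ≤ x) (hc : 0 ≤ c) :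
    gaussQ x - gaussQ (x + c) ≤ Real.exp (-x ^ 2 / 2) * (1 / 2 - gaussQ c) := by
  have hφ := continuous_stdGaussianPDF
  calc gaussQ x - gaussQ (x + c) = ∫ t in (0)..c, φ (x + t) := by
        rw [gaussQ_sub_eq_intervalIntegral, intervalIntegral.integral_comp_add_left, add_zero]
    _ ≤ ∫ t in (0)..c, Real.exp (-x ^ 2 / 2) * φ t := by
        refine intervalIntegral.integral_mono_on hc
          ((hφ.comp (continuous_const_add x)).intervalIntegrable 0 c)
          ((hφ.const_mul _).intervalIntegrable 0 c) fun t ht => ?_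
        rw [stdGaussianPDF_add]
        gcongr
        · exact (stdGaussianPDF_pos t).le
        · linarith [mul_nonneg hx ht.1]
    _ = Real.exp (-x ^ 2 / 2) * (1 / 2 - gaussQ c) := by
        rw [intervalIntegral.integral_const_mul, ← gaussQ_sub_eq_intervalIntegral, gaussQ_zero]

lemma gaussQ_sub_gaussQ_add_le_mul_of_tangent {x q c₀ : ℝ} (hx : 0 ≤ x)
    (hslope : q ≤ Real.exp (-x ^ 2 / 2 - x * c₀)) (hvalue : gaussQ x ≤ q * gaussQ (-c₀)) (c : ℝ) :
    gaussQ x - gaussQ (x + c) ≤ q * gaussQ (-c) := by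
  -- `hslope` makes `t ↦ q * Q(-t) + Q(x + t)` decrease up to `c₀`; beyond it `hvalue` suffices.
  rcases le_total c c₀ with hc | hc
  · have hderiv (t : ℝ) : HasDerivAt (fun t => q * gaussQ (-t) + gaussQ (x + t))
        ((q - Real.exp (-x ^ 2 / 2 - x * t)) * φ t) t := by
      refine (((hasDerivAt_gaussQ (-t)).comp t (hasDerivAt_neg t)).const_mul q |>.add
        ((hasDerivAt_gaussQ (x + t)).comp_const_add x t)).congr_deriv ?_
      rw [stdGaussianPDF_add, stdGaussianPDF_eq (-t), stdGaussianPDF_eq t]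
      ring_nf
    have hanti : AntitoneOn (fun t => q * gaussQ (-t) + gaussQ (x + t)) (Iic c₀) := by
      refine antitoneOn_of_hasDerivWithinAt_nonpos (convex_Iic c₀)
        (fun t _ => (hderiv t).continuousAt.continuousWithinAt)
        (fun t _ => (hderiv t).hasDerivWithinAt) fun t ht => ?_
      refine mul_nonpos_of_nonpos_of_nonneg (sub_nonpos.2 (hslope.trans ?_))
        (stdGaussianPDF_pos t).le
      have htc : t ≤ c₀ := mem_Iic.1 (interior_subset ht)
      gcongr
    have := hanti hc self_mem_Iic hc
    linarith [gaussQ_pos (x + c₀)]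
  · have hq : 0 < q :=
      (pos_iff_pos_of_mul_pos ((gaussQ_pos x).trans_le hvalue)).2 (gaussQ_pos (-c₀))
    have : q * gaussQ (-c₀) ≤ q * gaussQ (-c) := by
      gcongr
      exact strictAnti_gaussQ.antitone (neg_le_neg hc)
    linarith [gaussQ_pos (x + c)]

lemma gaussQ_sqrt_two_mul_sub_le_of_tail_le {b r : ℝ} (hb : 0 < b) (hr : 1 < r)
    (hratio : r * gaussQ b ≤ Real.exp (-b ^ 2))
    (htail : Real.log r / (√2 * b) * gaussQ (Real.log r / (√2 * b)) ≤
      (1 - 1 / √2) * φ 0 * (r * Real.log r)) (c : ℝ) :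
    gaussQ (√2 * b) - gaussQ (√2 * b + c) ≤ gaussQ b * gaussQ (-c) := by
  have hsq : √2 ^ 2 = (2 : ℝ) := Real.sq_sqrt two_pos.le
  have hφ := stdGaussianPDF_pos 0
  set c₀ := Real.log r / (√2 * b)
  have hxc₀ : √2 * b * c₀ = Real.log r := mul_div_cancel₀ _ (by positivity)
  have hslope : gaussQ b ≤ Real.exp (-(√2 * b) ^ 2 / 2 - √2 * b * c₀) := by
    rw [hxc₀, mul_pow, hsq, Real.exp_sub, Real.exp_log (by positivity), le_div_iff₀ (by positivity),
      show -(2 * b ^ 2) / 2 = -b ^ 2 by ring]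
    linarith
  have hsecant : (√2 - 1) * b * φ 0 * r * gaussQ b ≤ gaussQ b - gaussQ (√2 * b) := by
    have := sub_mul_stdGaussianPDF_le_gaussQ_sub hb.le
      (le_mul_of_one_le_left hb.le Real.one_lt_sqrt_two.le)
    rw [stdGaussianPDF_eq, mul_pow, hsq, show -(2 * b ^ 2) / 2 = -b ^ 2 by ring] at this
    have hcoef : 0 ≤ (√2 - 1) * b * φ 0 :=
      mul_nonneg (mul_nonneg (sub_nonneg.2 Real.one_lt_sqrt_two.le) hb.le) hφ.le
    linarith [mul_le_mul_of_nonneg_left hratio hcoef]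
  have htail' : gaussQ c₀ ≤ (√2 - 1) * b * φ 0 * r := by
    refine le_of_mul_le_mul_left (htail.trans_eq ?_) (div_pos (Real.log_pos hr) (by positivity))
    rw [← hxc₀]
    field_simp
  refine gaussQ_sub_gaussQ_add_le_mul_of_tangent (by positivity) hslope ?_ c
  rw [gaussQ_neg]
  linarith [mul_le_mul_of_nonneg_left htail' (gaussQ_pos b).le]

lemma le_one_sub_inv_sqrt_two : 0.29 ≤ 1 - 1 / √2 := by
  have : 1.41 ≤ √2 := Real.le_sqrt_of_sq_le (by norm_num)
  have : 1 / √2 ≤ 1 / 1.41 := one_div_le_one_div_of_le (by norm_num) this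
  linarith

lemma two_mul_gaussQ_le_exp_neg_sq {b : ℝ} (hb : 0 ≤ b) (hb' : b ≤ Real.log 2 / 2) :
    2 * gaussQ b ≤ Real.exp (-b ^ 2) := by
  have hφ := stdGaussianPDF_zero_mem_Icc.1
  have hcubic : b ^ 2 ≤ 2 * φ 0 * (b - b ^ 3 / 6) := by
    have hb₁ : b ≤ 0.35 := by linarith [Real.log_two_lt_d9]
    have hlinear : b ≤ 2 * φ 0 * (1 - b ^ 2 / 6) :=
      calc b ≤ 2 * 0.398 * (1 - 0.35 ^ 2 / 6) := by linarith
        _ ≤ 2 * φ 0 * (1 - b ^ 2 / 6) := by gcongr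
    linarith [mul_le_mul_of_nonneg_left hlinear hb]
  linarith [gaussQ_le_cubic hb, Real.add_one_le_exp (-b ^ 2)]

lemma mul_gaussQ_le_of_sqrt_two_le {x : ℝ} (hx : √2 ≤ x) :
    x * gaussQ x ≤ φ 0 * Real.exp (-1) := by
  have hsq : 2 ≤ x ^ 2 := (Real.sqrt_le_left (by linarith [Real.sqrt_nonneg 2])).1 hx
  have hφ := stdGaussianPDF_pos 0
  calc x * gaussQ x ≤ φ 0 * Real.exp (-x ^ 2 / 2) :=
        (mul_gaussQ_le_stdGaussianPDF x).trans_eq (stdGaussianPDF_eq x)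
    _ ≤ φ 0 * Real.exp (-1) := by gcongr; linarith

lemma gaussQ_sqrt_two_mul_sub_le_of_le_half_log_two {b : ℝ} (hb : 0 < b)
    (hb' : b ≤ Real.log 2 / 2) (c : ℝ) :
    gaussQ (√2 * b) - gaussQ (√2 * b + c) ≤ gaussQ b * gaussQ (-c) := by
  have htail : √2 ≤ Real.log 2 / (√2 * b) := by
    rw [le_div_iff₀ (by positivity), ← mul_assoc, Real.mul_self_sqrt two_pos.le]
    linarith
  have hconst : Real.exp (-1) ≤ (1 - 1 / √2) * (2 * Real.log 2) :=
    calc Real.exp (-1) ≤ 0.29 * (2 * 0.6931) := by linarith [Real.exp_neg_one_lt_d9]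
      _ ≤ (1 - 1 / √2) * (2 * Real.log 2) := by
        have := le_one_sub_inv_sqrt_two
        gcongr
        linarith [Real.log_two_gt_d9]
  refine gaussQ_sqrt_two_mul_sub_le_of_tail_le hb one_lt_two
    (two_mul_gaussQ_le_exp_neg_sq hb.le hb') ((mul_gaussQ_le_of_sqrt_two_le htail).trans ?_) c
  linarith [mul_le_mul_of_nonneg_left hconst (stdGaussianPDF_pos 0).le]

lemma mul_gaussQ_le_one_fifth (x : ℝ) : x * gaussQ x ≤ 1 / 5 := by
  obtain ⟨hφ, hφ'⟩ := stdGaussianPDF_zero_mem_Icc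
  rcases le_or_gt x 0 with hneg | hpos
  · linarith [mul_nonpos_of_nonpos_of_nonneg hneg (gaussQ_pos x).le]
  rcases le_total x 1.2 with hx | hx
  · calc x * gaussQ x ≤ x * (1 / 2 - 0.398 * (x - x ^ 3 / 6)) := by
          have hcube : x ^ 3 / 6 ≤ x := by nlinarith [mul_pos hpos hpos]
          refine mul_le_mul_of_nonneg_left ((gaussQ_le_cubic hpos.le).trans ?_) hpos.le
          gcongr
      _ ≤ 1 / 5 := by nlinarith [sq_nonneg (x - 0.7), mul_nonneg hpos.le (sub_nonneg.2 hx)]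
  · have hexp : Real.exp (-x ^ 2 / 2) ≤ 1 / 2 := by
      rw [← Real.le_log_iff_exp_le (by norm_num), one_div, Real.log_inv]
      nlinarith [Real.log_two_lt_d9]
    calc x * gaussQ x ≤ φ 0 * Real.exp (-x ^ 2 / 2) :=
          (mul_gaussQ_le_stdGaussianPDF x).trans_eq (stdGaussianPDF_eq x)
      _ ≤ 0.4 * (1 / 2) := by gcongr
      _ = 1 / 5 := by norm_num

lemma gaussQ_sqrt_two_mul_sub_le_of_le_exp {b : ℝ} (hb : 0 < b)
    (hratio : 9 / 4 * gaussQ b ≤ Real.exp (-b ^ 2)) (c : ℝ) :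
    gaussQ (√2 * b) - gaussQ (√2 * b + c) ≤ gaussQ b * gaussQ (-c) := by
  refine gaussQ_sqrt_two_mul_sub_le_of_tail_le hb (by norm_num) hratio
    ((mul_gaussQ_le_one_fifth _).trans ?_) c
  have hlog : 0.8 ≤ Real.log (9 / 4) := by
    have : Real.log (9 / 4) = Real.log 2 + Real.log (9 / 8) := by
      rw [← Real.log_mul (by norm_num) (by norm_num)]
      norm_num
    linarith [Real.log_two_gt_d9, Real.one_sub_inv_le_log_of_pos (x := 9 / 8) (by norm_num)]
  calc (1 / 5 : ℝ) ≤ 0.29 * 0.398 * (9 / 4 * 0.8) := by norm_num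
    _ ≤ (1 - 1 / √2) * φ 0 * (9 / 4 * Real.log (9 / 4)) := by
      have := le_one_sub_inv_sqrt_two
      have := stdGaussianPDF_zero_mem_Icc.1
      gcongr

lemma gaussQ_sqrt_two_mul_le {b : ℝ} (hb : Real.log 2 / 2 ≤ b) :
    gaussQ (√2 * b) ≤ 9 / 10 * gaussQ b := by
  have hb₀ : 0.345 ≤ b := by linarith [Real.log_two_gt_d9]
  have hsqrt : 1.41 ≤ √2 := Real.le_sqrt_of_sq_le (by norm_num)
  have hd : 0.138 ≤ (√2 - 1) * b := by nlinarith
  have hQd : gaussQ ((√2 - 1) * b) ≤ 0.45 :=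
    calc gaussQ ((√2 - 1) * b) ≤ gaussQ 0.138 := strictAnti_gaussQ.antitone hd
      _ ≤ 1 / 2 - φ 0 * (0.138 - 0.138 ^ 3 / 6) := gaussQ_le_cubic (by norm_num)
      _ ≤ 0.45 := by linarith [stdGaussianPDF_zero_mem_Icc.1]
  have hQb := gaussQ_pos b
  calc gaussQ (√2 * b) = gaussQ (b + (√2 - 1) * b) := by ring_nf
    _ ≤ 2 * gaussQ ((√2 - 1) * b) * gaussQ b := gaussQ_add_le_two_mul (by linarith) (by linarith)
    _ ≤ 9 / 10 * gaussQ b := by gcongr; linarith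

lemma gaussQ_sqrt_two_mul_sub_le_of_exp_le {b : ℝ} (hb : Real.log 2 / 2 ≤ b)
    (hratio : Real.exp (-b ^ 2) ≤ 9 / 4 * gaussQ b) (c : ℝ) :
    gaussQ (√2 * b) - gaussQ (√2 * b + c) ≤ gaussQ b * gaussQ (-c) := by
  have hb₀ : 0 < b := (half_pos (Real.log_pos one_lt_two)).trans_le hb
  have hQb := gaussQ_pos b
  rcases le_or_gt (9 / 10) (gaussQ (-c)) with hlarge | hlt
  · linarith [gaussQ_sqrt_two_mul_le hb, gaussQ_pos (√2 * b + c),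
      mul_le_mul_of_nonneg_left hlarge hQb.le]
  rcases le_total c 0 with hc | hc
  · have := strictAnti_gaussQ.antitone (show √2 * b + c ≤ √2 * b by linarith)
    linarith [mul_pos hQb (gaussQ_pos (-c))]
  · have hhalf : 0 ≤ gaussQ (-c) - 1 / 2 := by
      rw [← gaussQ_zero, sub_nonneg]
      exact strictAnti_gaussQ.antitone (neg_nonpos.2 hc)
    have hexponent : -(√2 * b) ^ 2 / 2 = -b ^ 2 := by
      rw [mul_pow, Real.sq_sqrt two_pos.le]
      ring
    calc gaussQ (√2 * b) - gaussQ (√2 * b + c)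
        ≤ Real.exp (-(√2 * b) ^ 2 / 2) * (1 / 2 - gaussQ c) :=
          gaussQ_sub_gaussQ_add_le_exp_mul (by positivity) hc
      _ = Real.exp (-b ^ 2) * (gaussQ (-c) - 1 / 2) := by rw [hexponent, gaussQ_neg]; ring
      _ ≤ 9 / 4 * gaussQ b * (gaussQ (-c) - 1 / 2) := by gcongr
      _ ≤ gaussQ b * gaussQ (-c) := by nlinarith

lemma gaussQ_sqrt_two_mul_sub_le {b : ℝ} (hb : 0 < b) (c : ℝ) :
    gaussQ (√2 * b) - gaussQ (√2 * b + c) ≤ gaussQ b * gaussQ (-c) := by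
  rcases le_total b (Real.log 2 / 2) with hsmall | hlarge
  · exact gaussQ_sqrt_two_mul_sub_le_of_le_half_log_two hb hsmall c
  rcases le_total (9 / 4 * gaussQ b) (Real.exp (-b ^ 2)) with hratio | hratio
  · exact gaussQ_sqrt_two_mul_sub_le_of_le_exp hb hratio c
  · exact gaussQ_sqrt_two_mul_sub_le_of_exp_le hlarge hratio c

theorem stmt_6_general (μ₁ μ₂ ε : ℝ) (h₂ : 0 < μ₂) (E : ℝ) (hE : 0 < E) :
    (((gaussianReal (μ₁ * Real.sqrt E) 1).prod (gaussianReal (μ₂ * Real.sqrt E) 1))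
        {z : ℝ × ℝ | z.1 + z.2 > 0 ∧ z.1 > 0 ∧ z.2 < 0}).toReal ≥
      (1 - gaussQ (ε * Real.sqrt (2 * E))) *
        (gaussQ (μ₂ * Real.sqrt (2 * E)) - gaussQ ((μ₂ + μ₁ - ε) * Real.sqrt (2 * E))) := by
  have hb : 0 < μ₂ * √E := by positivity
  have hsqrt : √(2 * E) = √2 * √E := Real.sqrt_mul two_pos.le E
  set w := ε * √(2 * E) with hw
  set c := (μ₁ - ε) * √(2 * E) with hc
  have hmid : (-w + -c) / 2 = -(μ₁ * √E) / √2 := by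
    have hsq : √2 ^ 2 = (2 : ℝ) := Real.sq_sqrt two_pos.le
    rw [eq_div_iff (by positivity), hw, hc, hsqrt]
    linear_combination (-(μ₁ * √E) / 2) * hsq
  calc (1 - gaussQ w) * (gaussQ (μ₂ * √(2 * E)) - gaussQ ((μ₂ + μ₁ - ε) * √(2 * E)))
      = gaussQ (-w) * (gaussQ (√2 * (μ₂ * √E)) - gaussQ (√2 * (μ₂ * √E) + c)) := by
        rw [gaussQ_neg, hc, hsqrt]
        ring_nf
    _ ≤ gaussQ (-w) * (gaussQ (μ₂ * √E) * gaussQ (-c)) :=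
        mul_le_mul_of_nonneg_left (gaussQ_sqrt_two_mul_sub_le hb c) (gaussQ_pos _).le
    _ = gaussQ (μ₂ * √E) * (gaussQ (-w) * gaussQ (-c)) := mul_left_comm _ _ _
    _ ≤ gaussQ (μ₂ * √E) * gaussQ (-(μ₁ * √E) / √2) ^ 2 := by
        rw [← hmid]
        exact mul_le_mul_of_nonneg_left (gaussQ_mul_gaussQ_le_sq _ _) (gaussQ_pos _).le
    _ ≤ _ := gaussQ_mul_gaussQ_sq_le_gaussianReal_prod_real _ hb.le

theorem stmt_6 (μ₁ μ₂ ε : ℝ) (h₁ : 0 < μ₁) (h₂ : 0 < μ₂) (hε0 : 0 < ε)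
    (hε : ε < min μ₁ μ₂) (E : ℝ) (hE : 0 < E) :
    (((gaussianReal (μ₁ * Real.sqrt E) 1).prod (gaussianReal (μ₂ * Real.sqrt E) 1))
        {z : ℝ × ℝ | z.1 + z.2 > 0 ∧ z.1 > 0 ∧ z.2 < 0}).toReal ≥
      (1 - gaussQ (ε * Real.sqrt (2 * E))) *
        (gaussQ (μ₂ * Real.sqrt (2 * E)) - gaussQ ((μ₂ + μ₁ - ε) * Real.sqrt (2 * E))) :=
  stmt_6_general μ₁ μ₂ ε h₂ E hE
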